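/- arXiv:1011.4194 — 3 statements merged into one kernel-verified Lean document; each statement's English description precedes it below -/
import Mathlib

section
/- There exists a constant Λ > 0 such that ν₀(v) ≥ Λ(1+|v|) for all v ∈ ℝ³. -/
/-!
The lower bound only uses velocities `u` in the closed unit ball. There the Gaussian weight is at
least `e⁻¹`, and `⟨u - v⟩ ≥ max(1, |v| - 1) ≥ (1 + |v|) / 3` (`one_add_norm_le_jap_sub`), so that
`r₀(u,v) ≥ C⁻¹ e⁻¹ (1 + |v|) / 3`; integrating over the ball gives the claim, with `Λ` proportional
to its volume.

Discarding the complement of the ball requires `r₀(·,v)` to be integrable, since otherwise the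
Bochner integral is `0` by convention. This is where the upper bound on `r₀` enters: since
`⟨u - v⟩ ≤ (2 + |v|) e^{|u|²/2}` (`jap_sub_le`), `r₀(·,v)` is dominated by a multiple of the Gaussian
`e^{-|u|²/2}`.
-/

open MeasureTheory Real Filter
open scoped InnerProductSpace
noncomputable section

/-- `ℝ³` as a Euclidean space. -/
abbrev V : Type := EuclideanSpace ℝ (Fin 3)

/-- The unit sphere `S² ⊂ ℝ³`. -/
abbrev S2 : Type := Metric.sphere (0 : V) 1

/-- The surface measure on `S²`. -/
noncomputable def σS : Measure S2 := (volume : Measure V).toSphere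

/-- The Japanese bracket `⟨v⟩ = (1+|v|²)^{1/2}`. -/
noncomputable def jap (v : V) : ℝ := Real.sqrt (1 + ‖v‖ ^ 2)

/-- A fundamental domain for the torus `𝕋³ = ℝ³/(2πℤ)³`. -/
def box : Set V := {x | ∀ i : Fin 3, x i ∈ Set.Ico (0 : ℝ) (2 * π)}

/-- The standard basis vectors of `ℝ³`. -/
noncomputable def eV (i : Fin 3) : V := EuclideanSpace.single i (1 : ℝ)

/-- The `i`-th partial derivative in the `x` variable. -/
noncomputable def pdX (i : Fin 3) (f : V → V → ℝ) : V → V → ℝ :=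
  fun v x => fderiv ℝ (f v) x (eV i)

/-- The iterated `x`-derivative `∂ₓ^α`. -/
noncomputable def pdA (α : Fin 3 → ℕ) (f : V → V → ℝ) : V → V → ℝ :=
  (pdX 0)^[α 0] ((pdX 1)^[α 1] ((pdX 2)^[α 2] f))

/-- `2π`-periodicity in the `x` variable (i.e. being a function on `ℝ³ × 𝕋³`). -/
def PeriodicX (f : V → V → ℝ) : Prop :=
  ∀ v x (i : Fin 3), f v (x + (2 * π) • eV i) = f v x

/-- Sum of `F α` over all multi-indices `α` with `|α| ≤ N`. -/
noncomputable def msum (N : ℕ) (F : (Fin 3 → ℕ) → ℝ) : ℝ :=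
  ∑ α : Fin 3 → Fin (N + 1),
    if (α 0 : ℕ) + (α 1 : ℕ) + (α 2 : ℕ) ≤ N then F (fun i => (α i : ℕ)) else 0

/-- The hard-sphere collision operator `Q(f,g)`. -/
noncomputable def Qop (f g : V → ℝ) (v : V) : ℝ :=
  ∫ u : V, ∫ ω : S2, |⟪u - v, (ω : V)⟫_ℝ| *
    (f (u - ⟪u - v, (ω : V)⟫_ℝ • (ω : V)) * g (v + ⟪u - v, (ω : V)⟫_ℝ • (ω : V))
      - f u * g v) ∂σS

/-- `Q` acting in the `v` variable for each fixed `x`. -/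
noncomputable def QopX (f g : V → V → ℝ) (v x : V) : ℝ :=
  Qop (fun u => f u x) (fun u => g u x) v

/-- `ν₀(v) = ∫ r₀(u,v) du`. -/
noncomputable def nu0 (r₀ : V → V → ℝ) (v : V) : ℝ := ∫ u : V, r₀ u v

/-- `(K₀ f)(v) = ∫ r₀(v,u) f(u) du`. -/
noncomputable def K0 (r₀ : V → V → ℝ) (f : V → ℝ) (v : V) : ℝ := ∫ u : V, r₀ v u * f u

/-- `K₀` acting in the `v` variable for each fixed `x`. -/
noncomputable def K0X (r₀ : V → V → ℝ) (f : V → V → ℝ) (v x : V) : ℝ :=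
  K0 r₀ (fun u => f u x) v

/-- `ν₁(v) = ∫∫ |(u−v)·ω| e^{−|u|²} du dω`. -/
noncomputable def nu1 (v : V) : ℝ :=
  ∫ u : V, ∫ ω : S2, |⟪u - v, (ω : V)⟫_ℝ| * Real.exp (-‖u‖ ^ 2) ∂σS

/-- Glassey's explicit form of `K₁`. -/
noncomputable def K1 (f : V → ℝ) (v : V) : ℝ :=
  2 * π * ∫ u : V, ‖u - v‖⁻¹ * Real.exp (-(⟪u - v, v⟫_ℝ ^ 2 / ‖u - v‖ ^ 2)) * f u
    - π * ∫ u : V, ‖u - v‖ * Real.exp (-‖v‖ ^ 2) * f u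

/-- `K₁` acting in the `v` variable for each fixed `x`. -/
noncomputable def K1X (f : V → V → ℝ) (v x : V) : ℝ := K1 (fun u => f u x) v

/-- Pointwise two-sided bound `C⁻¹ e^{−|u|²}⟨u−v⟩ ≤ r₀(u,v) ≤ C e^{−|u|²}⟨u−v⟩`. -/
def R0Bounds (r₀ : V → V → ℝ) (C : ℝ) : Prop :=
  ∀ u v : V, C⁻¹ * (Real.exp (-‖u‖ ^ 2) * jap (u - v)) ≤ r₀ u v ∧
    r₀ u v ≤ C * (Real.exp (-‖u‖ ^ 2) * jap (u - v))

/-- Detailed balance: `r₀(u,v) = r₀(v,u) e^{|v|²−|u|²}`. -/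
def R0DetailedBalance (r₀ : V → V → ℝ) : Prop :=
  ∀ u v : V, r₀ u v = r₀ v u * Real.exp (‖v‖ ^ 2 - ‖u‖ ^ 2)

/-- The bounds `|∂ᵤᵏ∂ᵥˡ r₀(u,v)| ≤ C₂ e^{−|u|²/2} ⟨u−v⟩^{1−l}` for `k+l ≤ 1`. -/
def R0DerivBounds (r₀ : V → V → ℝ) (C₂ : ℝ) : Prop :=
  ∀ u v : V,
    |r₀ u v| ≤ C₂ * (Real.exp (-‖u‖ ^ 2 / 2) * jap (u - v)) ∧
    ‖fderiv ℝ (fun u' => r₀ u' v) u‖ ≤ C₂ * (Real.exp (-‖u‖ ^ 2 / 2) * jap (u - v)) ∧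
    ‖fderiv ℝ (fun v' => r₀ u v') v‖ ≤ C₂ * Real.exp (-‖u‖ ^ 2 / 2)

lemma one_add_norm_le_jap_sub {u : V} (hu : ‖u‖ ≤ 1) (v : V) :
    (1 + ‖v‖) / 3 ≤ jap (u - v) := by
  have h1 : 1 ≤ jap (u - v) := Real.one_le_sqrt.2 (by nlinarith [sq_nonneg ‖u - v‖])
  have h2 : ‖u - v‖ ≤ jap (u - v) := Real.le_sqrt_of_sq_le (by linarith)
  have h3 : ‖v‖ - ‖u‖ ≤ ‖u - v‖ := by
    rw [norm_sub_rev]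
    exact norm_sub_norm_le v u
  linarith

lemma jap_sub_le (u v : V) : jap (u - v) ≤ (2 + ‖v‖) * Real.exp (‖u‖ ^ 2 / 2) := by
  have h1 : jap (u - v) ≤ 1 + ‖u - v‖ :=
    Real.sqrt_le_iff.2 ⟨by positivity, by nlinarith [norm_nonneg (u - v)]⟩
  have h2 : ‖u - v‖ ≤ ‖u‖ + ‖v‖ := norm_sub_le u v
  have h3 := Real.add_one_le_exp (‖u‖ ^ 2 / 2)
  nlinarith [norm_nonneg v, sq_nonneg (‖u‖ - 1), sq_nonneg ‖u‖,
    mul_nonneg (norm_nonneg v) (sub_nonneg.2 h3), mul_nonneg (norm_nonneg v) (sq_nonneg ‖u‖)]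

lemma integrable_exp_neg_half_sq : Integrable (fun u : V => Real.exp (-(1 / 2) * ‖u‖ ^ 2)) := by
  -- A function with nonzero Bochner integral is integrable; the Gaussian integral is known.
  apply Integrable.of_integral_ne_zero
  rw [GaussianFourier.integral_rexp_neg_mul_sq_norm (by norm_num)]
  positivity

lemma integrable_r0 {r₀ : V → V → ℝ} (hr_meas : Measurable (Function.uncurry r₀))
    (hr_nonneg : ∀ u v : V, 0 ≤ r₀ u v) {C : ℝ} (hC : 0 < C) (hr_bd : R0Bounds r₀ C) (v : V) :
    Integrable (fun u => r₀ u v) := by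
  refine (integrable_exp_neg_half_sq.const_mul (C * (2 + ‖v‖))).mono'
    (hr_meas.comp measurable_prodMk_right).aestronglyMeasurable (ae_of_all _ fun u => ?_)
  rw [Real.norm_of_nonneg (hr_nonneg u v)]
  calc r₀ u v ≤ C * (Real.exp (-‖u‖ ^ 2) * jap (u - v)) := (hr_bd u v).2
    _ ≤ C * (Real.exp (-‖u‖ ^ 2) * ((2 + ‖v‖) * Real.exp (‖u‖ ^ 2 / 2))) := by
        gcongr
        exact jap_sub_le u v
    _ = C * (2 + ‖v‖) * (Real.exp (-‖u‖ ^ 2) * Real.exp (‖u‖ ^ 2 / 2)) := by ring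
    _ = C * (2 + ‖v‖) * Real.exp (-(1 / 2) * ‖u‖ ^ 2) := by
        rw [← Real.exp_add]
        ring_nf

/-- there is `Λ > 0` with `ν₀(v) ≥ Λ(1+|v|)` for all `v`. -/
theorem stmt_2 (r₀ : V → V → ℝ)
    (hr_meas : Measurable (Function.uncurry r₀))
    (hr_nonneg : ∀ u v : V, 0 ≤ r₀ u v)
    (C : ℝ) (hC : 0 < C) (hr_bd : R0Bounds r₀ C) :
    ∃ Λ > 0, ∀ v : V, Λ * (1 + ‖v‖) ≤ nu0 r₀ v := by
  have hvol : 0 < volume.real (Metric.closedBall (0 : V) 1) :=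
    ENNReal.toReal_pos (Metric.measure_closedBall_pos _ _ one_pos).ne' measure_closedBall_lt_top.ne
  refine ⟨C⁻¹ * (Real.exp (-1) * (1 / 3)) * volume.real (Metric.closedBall (0 : V) 1),
    by positivity, fun v => ?_⟩
  have hint := integrable_r0 hr_meas hr_nonneg hC hr_bd v
  have hlow : ∀ u ∈ Metric.closedBall (0 : V) 1,
      C⁻¹ * (Real.exp (-1) * ((1 + ‖v‖) / 3)) ≤ r₀ u v := by
    intro u hu
    have hu1 : ‖u‖ ≤ 1 := by simpa using hu
    refine le_trans ?_ (hr_bd u v).1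
    gcongr
    · exact pow_le_one₀ (norm_nonneg u) hu1
    · exact one_add_norm_le_jap_sub hu1 v
  have hball := setIntegral_ge_of_const_le_real measurableSet_closedBall
    (measure_closedBall_lt_top (μ := (volume : Measure V))).ne hlow hint.integrableOn
  have hfull : ∫ u in Metric.closedBall (0 : V) 1, r₀ u v ≤ nu0 r₀ v :=
    setIntegral_le_integral hint (ae_of_all _ fun u => hr_nonneg u v)
  linarith
end
end

section
/- There exists a constant Λ > 0 such that ν₁(v) ≥ Λ(1+|v|) for all v ∈ ℝ³. -/
/-!
The angular integral `N(w) = ∫_{S²} |w·ω| dω` is continuous, homogeneous of degree one and positive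
off the origin (the surface measure charges every nonempty open set), so compactness of the sphere
gives `c‖w‖ ≤ N(w)` with `c > 0`; trivially `N(w) ≤ σ(S²)‖w‖`. Since
`ν₁(v) = ∫ N(u - v) e^{-|u|²} du`, averaging over `u ↦ -u` and using
`‖u - v‖ + ‖u + v‖ ≥ 2 max(‖u‖, ‖v‖) ≥ ‖u‖ + ‖v‖` gives
`2 ν₁(v) ≥ c (A + B‖v‖)`, where `A` and `B` are the integrals of `‖u‖ e^{-|u|²}` and `e^{-|u|²}`.
-/

open MeasureTheory Real Filter
open scoped InnerProductSpace
noncomputable section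

/-- The angular integral `∫_{S²} |w·ω| dω`. -/
def angInt (w : V) : ℝ := ∫ ω : S2, |⟪w, (ω : V)⟫_ℝ| ∂σS

instance : IsFiniteMeasure σS := by unfold σS; infer_instance

instance : σS.IsOpenPosMeasure := by unfold σS; infer_instance

lemma abs_inner_sphere_le (w : V) (ω : S2) : |⟪w, (ω : V)⟫_ℝ| ≤ ‖w‖ := by
  have h := abs_real_inner_le_norm w (ω : V)
  rwa [norm_eq_of_mem_sphere ω, mul_one] at h

lemma integrable_abs_inner_sphere (w : V) :
    Integrable (fun ω : S2 => |⟪w, (ω : V)⟫_ℝ|) σS := by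
  refine Integrable.of_bound (C := ‖w‖) ?_ (Eventually.of_forall fun ω => ?_)
  · exact (by fun_prop : Continuous fun ω : S2 => |⟪w, (ω : V)⟫_ℝ|).aestronglyMeasurable
  · simpa using abs_inner_sphere_le w ω

lemma angInt_nonneg (w : V) : 0 ≤ angInt w := integral_nonneg fun _ => abs_nonneg _

lemma angInt_le (w : V) : angInt w ≤ σS.real Set.univ * ‖w‖ := by
  have h := integral_mono (integrable_abs_inner_sphere w) (integrable_const ‖w‖)
    (abs_inner_sphere_le w)
  simpa [angInt] using h

lemma angInt_smul (r : ℝ) (w : V) : angInt (r • w) = |r| * angInt w := by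
  simp only [angInt, real_inner_smul_left, abs_mul, integral_const_mul]

lemma continuous_angInt : Continuous angInt := by
  refine continuous_iff_continuousAt.2 fun w₀ => ?_
  refine continuousAt_of_dominated (bound := fun _ => ‖w₀‖ + 1) ?_ ?_ (integrable_const _) ?_
  · exact Eventually.of_forall fun w => (integrable_abs_inner_sphere w).aestronglyMeasurable
  · have h : ∀ᶠ w : V in nhds w₀, ‖w‖ < ‖w₀‖ + 1 :=
      continuous_norm.continuousAt.eventually_lt continuousAt_const (by simp)
    filter_upwards [h] with w hw
    refine Eventually.of_forall fun ω => ?_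
    simpa using (abs_inner_sphere_le w ω).trans hw.le
  · exact Eventually.of_forall fun ω => by fun_prop

lemma angInt_pos_of_sphere (w : S2) : 0 < angInt w := by
  refine integral_pos_of_integrable_nonneg_nonzero (x := w) (by fun_prop)
    (integrable_abs_inner_sphere w) (fun _ => abs_nonneg _) ?_
  simp

lemma exists_le_angInt : ∃ c > 0, ∀ w : V, c * ‖w‖ ≤ angInt w := by
  have hne : (Metric.sphere (0 : V) 1).Nonempty := NormedSpace.sphere_nonempty.2 zero_le_one
  obtain ⟨w₀, hw₀, hmin⟩ := (isCompact_sphere (0 : V) 1).exists_isMinOn hne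
    continuous_angInt.continuousOn
  refine ⟨angInt w₀, angInt_pos_of_sphere ⟨w₀, hw₀⟩, fun w => ?_⟩
  rcases eq_or_ne w 0 with rfl | hw
  · simpa using angInt_nonneg 0
  have hn : 0 < ‖w‖ := norm_pos_iff.2 hw
  have hmem : ‖w‖⁻¹ • w ∈ Metric.sphere (0 : V) 1 := by
    simp [norm_smul, hn.ne']
  have h : angInt w₀ ≤ angInt (‖w‖⁻¹ • w) := hmin hmem
  rw [angInt_smul, abs_of_pos (inv_pos.2 hn), inv_mul_eq_div, le_div_iff₀ hn] at h
  exact h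

lemma integrable_gauss {b : ℝ} (hb : 0 < b) : Integrable fun u : V => Real.exp (-b * ‖u‖ ^ 2) := by
  refine Integrable.of_integral_ne_zero ?_
  rw [GaussianFourier.integral_rexp_neg_mul_sq_norm hb]
  positivity

lemma integrable_exp_neg_sq : Integrable fun u : V => Real.exp (-‖u‖ ^ 2) := by
  simpa using integrable_gauss one_pos

lemma integrable_norm_mul_exp : Integrable fun u : V => ‖u‖ * Real.exp (-‖u‖ ^ 2) := by
  refine (integrable_gauss (b := 1 / 2) (by norm_num)).mono'
    (by fun_prop : Continuous fun u : V => ‖u‖ * Real.exp (-‖u‖ ^ 2)).aestronglyMeasurable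
    (Eventually.of_forall fun u => ?_)
  -- `t ≤ 1 + t² / 2 ≤ exp (t² / 2)`
  have h1 : ‖u‖ ≤ Real.exp (‖u‖ ^ 2 / 2) := by
    nlinarith [Real.add_one_le_exp (‖u‖ ^ 2 / 2), sq_nonneg (‖u‖ - 1)]
  rw [Real.norm_of_nonneg (by positivity)]
  calc ‖u‖ * Real.exp (-‖u‖ ^ 2) ≤ Real.exp (‖u‖ ^ 2 / 2) * Real.exp (-‖u‖ ^ 2) := by gcongr
    _ = Real.exp (-(1 / 2) * ‖u‖ ^ 2) := by rw [← Real.exp_add]; ring_nf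

lemma nu1_eq (v : V) : nu1 v = ∫ u : V, angInt (u - v) * Real.exp (-‖u‖ ^ 2) := by
  simp only [nu1, angInt, integral_mul_const]

lemma integrable_angInt_mul_exp (v : V) :
    Integrable fun u : V => angInt (u - v) * Real.exp (-‖u‖ ^ 2) := by
  have hc : Continuous fun u : V => angInt (u - v) * Real.exp (-‖u‖ ^ 2) :=
    (continuous_angInt.comp (by fun_prop)).mul (by fun_prop)
  refine ((integrable_norm_mul_exp.add (integrable_exp_neg_sq.const_mul ‖v‖)).const_mul
    (σS.real Set.univ)).mono' hc.aestronglyMeasurable (Eventually.of_forall fun u => ?_)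
  rw [Real.norm_of_nonneg (mul_nonneg (angInt_nonneg _) (Real.exp_pos _).le)]
  calc angInt (u - v) * Real.exp (-‖u‖ ^ 2)
      ≤ σS.real Set.univ * (‖u‖ + ‖v‖) * Real.exp (-‖u‖ ^ 2) := by
        gcongr
        exact (angInt_le _).trans (by gcongr; exact norm_sub_le u v)
    _ = _ := by simp only [Pi.add_apply]; ring

/-- there is `Λ > 0` with `ν₁(v) ≥ Λ(1+|v|)` for all `v`. -/
theorem stmt_3 : ∃ Λ > 0, ∀ v : V, Λ * (1 + ‖v‖) ≤ nu1 v := by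
  obtain ⟨c, hc, hN⟩ := exists_le_angInt
  set A : ℝ := ∫ u : V, ‖u‖ * Real.exp (-‖u‖ ^ 2) with hA
  set B : ℝ := ∫ u : V, Real.exp (-‖u‖ ^ 2) with hB
  have hApos : 0 < A := by
    obtain ⟨e, he⟩ := exists_ne (0 : V)
    refine integral_pos_of_integrable_nonneg_nonzero (x := e) (by fun_prop)
      integrable_norm_mul_exp (fun _ => by positivity) ?_
    have := norm_pos_iff.2 he
    positivity
  have hBpos : 0 < B := integral_exp_pos integrable_exp_neg_sq
  refine ⟨c * min A B / 2, by positivity, fun v => ?_⟩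
  have hF := integrable_angInt_mul_exp v
  have hsym : nu1 v = ∫ u : V, angInt (-u - v) * Real.exp (-‖u‖ ^ 2) := by
    rw [nu1_eq, ← integral_neg_eq_self]
    simp only [norm_neg]
  have hF' : Integrable fun u : V => angInt (-u - v) * Real.exp (-‖u‖ ^ 2) := by
    simpa only [norm_neg] using hF.comp_neg
  have key : c * (A + ‖v‖ * B) ≤ nu1 v + nu1 v := by
    nth_rewrite 2 [hsym]
    rw [nu1_eq, ← integral_add hF hF', hA, hB, ← integral_const_mul,
      ← integral_add integrable_norm_mul_exp (integrable_exp_neg_sq.const_mul ‖v‖),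
      ← integral_const_mul]
    refine integral_mono ((integrable_norm_mul_exp.add
      (integrable_exp_neg_sq.const_mul ‖v‖)).const_mul c) (hF.add hF') fun u => ?_
    have h1 : ‖u‖ + ‖v‖ ≤ ‖u - v‖ + ‖-u - v‖ := by
      have ha : ‖(2 : ℝ) • u‖ ≤ ‖u - v‖ + ‖-u - v‖ := by
        rw [show (2 : ℝ) • u = (u - v) - (-u - v) by module]
        exact norm_sub_le _ _
      have hb : ‖(-2 : ℝ) • v‖ ≤ ‖u - v‖ + ‖-u - v‖ := by
        rw [show (-2 : ℝ) • v = (u - v) + (-u - v) by module]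
        exact norm_add_le _ _
      rw [norm_smul] at ha hb
      norm_num at ha hb
      linarith
    have h2 : c * (‖u‖ + ‖v‖) ≤ angInt (u - v) + angInt (-u - v) := by
      have := mul_le_mul_of_nonneg_left h1 hc.le
      linarith [hN (u - v), hN (-u - v)]
    have h3 := mul_le_mul_of_nonneg_right h2 (Real.exp_pos (-‖u‖ ^ 2)).le
    simp only
    linarith
  have h4 : min A B * (1 + ‖v‖) ≤ A + ‖v‖ * B := by
    nlinarith [min_le_left A B, mul_le_mul_of_nonneg_left (min_le_right A B) (norm_nonneg v)]
  have h5 := mul_le_mul_of_nonneg_left h4 hc.le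
  linarith
end
end

section
/- For every m ≥ 0 there exists a constant C_m > 0 such that for all measurable f, g : ℝ³ → ℝ with ⟨v⟩^{m+1}f, ⟨v⟩^{m+1}g ∈ L¹(ℝ³): ‖⟨v⟩^m Q(f,g)‖_{L¹(ℝ³)} ≤ C_m ‖f‖_{L¹(ℝ³)} ‖⟨v⟩^{m+1} g‖_{L¹(ℝ³)} + C_m ‖⟨v⟩^{m+1} f‖_{L¹(ℝ³)} ‖g‖_{L¹(ℝ³)}. -/
/-!
The proof works with lower Lebesgue integrals of absolute values throughout. For fixed `ω`, the
collision map `(v, u) ↦ (v', u')` is a linear involution of `ℝ³ × ℝ³`, so its determinant is `±1`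
and it preserves Lebesgue measure (`measurePreserving_coll`). It also preserves
`|(u - v)·ω|` and the energy `|u|² + |v|²`. Changing variables in the gain term therefore moves the
collision map from `f` and `g` onto the weight `⟨v⟩^m`, and both gain and loss terms are controlled
by `|(u - v)·ω| ⟨w⟩^m ≤ 2^(m+1) (⟨v⟩^(m+1) + ⟨u⟩^(m+1))`, valid whenever `|w|² ≤ |u|² + |v|²`
(`kernel_mul_jap_le`). Tonelli's theorem then splits the resulting integral into the products
of one-particle integrals (`lintegral_gain_loss_dir_le`), and `S²` has finite area.
-/


open MeasureTheory Real Filter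
open scoped InnerProductSpace
noncomputable section

open scoped ENNReal

/-! ### The collision map -/

/-- The collision map for the direction `ω` as a linear endomorphism of pairs of velocities,
in the order `(v, u) ↦ (v', u')`. -/
def coll (ω : V) : V × V →ₗ[ℝ] V × V where
  toFun p := (p.1 + ⟪p.2 - p.1, ω⟫_ℝ • ω, p.2 - ⟪p.2 - p.1, ω⟫_ℝ • ω)
  map_add' p q := by
    ext1 <;> simp only [Prod.fst_add, Prod.snd_add, inner_sub_left, inner_add_left] <;> module
  map_smul' c p := by
    ext1 <;> simp only [Prod.smul_fst, Prod.smul_snd, inner_sub_left, real_inner_smul_left,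
      RingHom.id_apply] <;> module

lemma coll_apply (ω : V) (p : V × V) :
    coll ω p = (p.1 + ⟪p.2 - p.1, ω⟫_ℝ • ω, p.2 - ⟪p.2 - p.1, ω⟫_ℝ • ω) := rfl

/-- A collision reverses the component of the relative velocity along `ω`. -/
lemma inner_coll {ω : V} (hω : ‖ω‖ = 1) (p : V × V) :
    ⟪(coll ω p).2 - (coll ω p).1, ω⟫_ℝ = -⟪p.2 - p.1, ω⟫_ℝ := by
  simp only [coll_apply, inner_sub_left, inner_add_left, real_inner_smul_left,
    real_inner_self_eq_norm_sq, hω]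
  ring

lemma coll_coll {ω : V} (hω : ‖ω‖ = 1) (p : V × V) : coll ω (coll ω p) = p := by
  rw [coll_apply ω (coll ω p), inner_coll hω, coll_apply]
  ext1 <;> simp

lemma measurePreserving_coll {ω : V} (hω : ‖ω‖ = 1) :
    MeasurePreserving (coll ω) (volume : Measure (V × V)) volume := by
  have hd : LinearMap.det (coll ω) * LinearMap.det (coll ω) = 1 := by
    rw [← LinearMap.det_comp, LinearMap.ext (f := coll ω ∘ₗ coll ω) (g := LinearMap.id)
      (coll_coll hω), LinearMap.det_id]
  have h0 : LinearMap.det (coll ω) ≠ 0 := fun h => by simp [h] at hd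
  refine ⟨(coll ω).continuous_of_finiteDimensional.measurable, ?_⟩
  have : Measure.IsAddHaarMeasure (volume : Measure (V × V)) :=
    inferInstanceAs (Measure.IsAddHaarMeasure ((volume : Measure V).prod volume))
  rw [Measure.map_linearMap_addHaar_eq_smul_addHaar _ h0]
  rcases mul_self_eq_one_iff.1 hd with h | h <;> simp [h]

/-- Consequence of conservation of energy in a collision. -/
lemma norm_sq_coll_le {ω : V} (hω : ‖ω‖ = 1) (p : V × V) :
    ‖(coll ω p).1‖ ^ 2 ≤ ‖p.1‖ ^ 2 + ‖p.2‖ ^ 2 := by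
  have h : ‖(coll ω p).1‖ ^ 2 + ‖(coll ω p).2‖ ^ 2 = ‖p.1‖ ^ 2 + ‖p.2‖ ^ 2 := by
    simp only [coll_apply]
    rw [norm_add_sq_real, norm_sub_sq_real, norm_smul, hω, real_inner_smul_right,
      real_inner_smul_right]
    simp only [Real.norm_eq_abs, mul_one, sq_abs, inner_sub_left]
    ring
  nlinarith [sq_nonneg ‖(coll ω p).2‖]

/-! ### Weights and the collision kernel -/

lemma one_le_jap (v : V) : 1 ≤ jap v := by
  rw [jap, Real.one_le_sqrt]; nlinarith [sq_nonneg ‖v‖]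

lemma jap_nonneg (v : V) : 0 ≤ jap v := Real.sqrt_nonneg _

lemma jap_sq (v : V) : jap v ^ 2 = 1 + ‖v‖ ^ 2 := Real.sq_sqrt (by positivity)

lemma norm_le_jap (v : V) : ‖v‖ ≤ jap v := Real.le_sqrt_of_sq_le (by linarith)

lemma continuous_jap : Continuous jap := by unfold jap; fun_prop

/-- The weight at any velocity `w` whose energy is at most that of the pair `p`, multiplied by the
collision kernel, is bounded by the sum of the weights of order `m + 1` of the pair. -/
lemma kernel_mul_jap_le {m : ℝ} (hm : 0 ≤ m) {ω w : V} (hω : ‖ω‖ = 1) (p : V × V)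
    (hw : ‖w‖ ^ 2 ≤ ‖p.1‖ ^ 2 + ‖p.2‖ ^ 2) :
    |⟪p.2 - p.1, ω⟫_ℝ| * jap w ^ m ≤
      2 ^ (m + 1) * (jap p.1 ^ (m + 1) + jap p.2 ^ (m + 1)) := by
  set M := max (jap p.1) (jap p.2) with hM
  have h1 : jap p.1 ≤ M := le_max_left _ _
  have h2 : jap p.2 ≤ M := le_max_right _ _
  have hM1 : 1 ≤ M := (one_le_jap _).trans h1
  have hB : |⟪p.2 - p.1, ω⟫_ℝ| ≤ 2 * M := by
    calc |⟪p.2 - p.1, ω⟫_ℝ| ≤ ‖p.2 - p.1‖ * ‖ω‖ := abs_real_inner_le_norm _ _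
      _ ≤ ‖p.2‖ + ‖p.1‖ := by rw [hω, mul_one]; exact norm_sub_le _ _
      _ ≤ 2 * M := by linarith [norm_le_jap p.1, norm_le_jap p.2]
  have hJ : jap w ≤ 2 * M := by
    refine Real.sqrt_le_iff.2 ⟨by linarith, ?_⟩
    nlinarith [jap_sq p.1, jap_sq p.2, jap_nonneg p.1, jap_nonneg p.2]
  have hMs : M ^ (m + 1) ≤ jap p.1 ^ (m + 1) + jap p.2 ^ (m + 1) := by
    have a1 := Real.rpow_nonneg (jap_nonneg p.1) (m + 1)
    have a2 := Real.rpow_nonneg (jap_nonneg p.2) (m + 1)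
    rcases max_choice (jap p.1) (jap p.2) with h | h <;> rw [hM, h] <;> linarith
  calc |⟪p.2 - p.1, ω⟫_ℝ| * jap w ^ m
      ≤ (2 * M) * (2 * M) ^ m :=
        mul_le_mul hB (Real.rpow_le_rpow (jap_nonneg _) hJ hm)
          (Real.rpow_nonneg (jap_nonneg _) _) (by linarith)
    _ = 2 ^ (m + 1) * M ^ (m + 1) := by
        rw [← Real.mul_rpow (by norm_num) (by linarith), Real.rpow_add_one (by positivity)]
        ring
    _ ≤ _ := by gcongr

/-- The weight `⟨v⟩^s` with values in `ℝ≥0∞`. -/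
def wt (s : ℝ) (v : V) : ℝ≥0∞ := ENNReal.ofReal (jap v ^ s)

lemma measurable_wt (s : ℝ) : Measurable (wt s) :=
  (continuous_jap.measurable.pow_const s).ennreal_ofReal

/-- The collision kernel `|(u - v)·ω|` with values in `ℝ≥0∞`, at the pair `p = (v, u)`. -/
def kern (ω : V) (p : V × V) : ℝ≥0∞ := ENNReal.ofReal |⟪p.2 - p.1, ω⟫_ℝ|

lemma kern_mul_wt_le {m : ℝ} (hm : 0 ≤ m) {ω w : V} (hω : ‖ω‖ = 1) (p : V × V)
    (hw : ‖w‖ ^ 2 ≤ ‖p.1‖ ^ 2 + ‖p.2‖ ^ 2) :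
    kern ω p * wt m w ≤ ENNReal.ofReal (2 ^ (m + 1)) * (wt (m + 1) p.1 + wt (m + 1) p.2) := by
  unfold kern wt
  rw [← ENNReal.ofReal_mul (abs_nonneg _),
    ← ENNReal.ofReal_add (Real.rpow_nonneg (jap_nonneg _) _) (Real.rpow_nonneg (jap_nonneg _) _),
    ← ENNReal.ofReal_mul (by positivity)]
  exact ENNReal.ofReal_le_ofReal (kernel_mul_jap_le hm hω p hw)

lemma measurable_kern (ω : V) : Measurable (kern ω) := by
  unfold kern
  exact Measurable.ennreal_ofReal (by fun_prop)

lemma measurable_coll (ω : V) : Measurable (coll ω) :=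
  (coll ω).continuous_of_finiteDimensional.measurable

lemma measurable_coll_uncurry : Measurable fun q : (V × V) × S2 => coll (q.2 : V) q.1 := by
  apply Continuous.measurable
  simp only [coll_apply]
  fun_prop

lemma measurable_kern_uncurry : Measurable fun q : (V × V) × S2 => kern (q.2 : V) q.1 := by
  unfold kern
  apply Measurable.ennreal_ofReal
  apply Continuous.measurable
  fun_prop

/-! ### Integral bounds for gain and loss -/

/-- The bound for a fixed direction `ω`; the gain term is reduced to the weight at `v'` by the
measure-preserving change of variables. -/
lemma lintegral_gain_loss_dir_le {m : ℝ} (hm : 0 ≤ m) {ω : V} (hω : ‖ω‖ = 1) {F G : V → ℝ≥0∞}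
    (hF : Measurable F) (hG : Measurable G) :
    ∫⁻ p : V × V, wt m p.1 * (kern ω p * (F (coll ω p).2 * G (coll ω p).1 + F p.2 * G p.1)) ≤
      ENNReal.ofReal (2 * 2 ^ (m + 1)) *
        ((∫⁻ u, F u) * (∫⁻ v, wt (m + 1) v * G v) + (∫⁻ u, wt (m + 1) u * F u) * ∫⁻ v, G v) := by
  have hW := measurable_wt m
  have hW' := measurable_wt (m + 1)
  have hk := measurable_kern ω
  have hc := measurable_coll ω
  set c := ENNReal.ofReal (2 ^ (m + 1))
  have hgain : ∫⁻ p : V × V, wt m p.1 * (kern ω p * (F (coll ω p).2 * G (coll ω p).1)) =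
      ∫⁻ p : V × V, wt m (coll ω p).1 * (kern ω p * (F p.2 * G p.1)) := by
    rw [← (measurePreserving_coll hω).lintegral_comp
      (f := fun p : V × V => wt m (coll ω p).1 * (kern ω p * (F p.2 * G p.1))) (by fun_prop)]
    refine lintegral_congr fun p => ?_
    have : kern ω (coll ω p) = kern ω p := by unfold kern; rw [inner_coll hω, abs_neg]
    rw [coll_coll hω, this]
  have hsplit : ∫⁻ p : V × V, (wt (m + 1) p.1 + wt (m + 1) p.2) * (F p.2 * G p.1) =
      (∫⁻ u, F u) * (∫⁻ v, wt (m + 1) v * G v) + (∫⁻ u, wt (m + 1) u * F u) * ∫⁻ v, G v := by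
    have e : ∀ p : V × V, (wt (m + 1) p.1 + wt (m + 1) p.2) * (F p.2 * G p.1) =
        (wt (m + 1) p.1 * G p.1) * F p.2 + G p.1 * (wt (m + 1) p.2 * F p.2) := fun p => by ring
    simp_rw [e]
    rw [lintegral_add_left (by fun_prop), Measure.volume_eq_prod,
      lintegral_prod_mul (f := fun v => wt (m + 1) v * G v) (g := F)
        (by fun_prop) (by fun_prop),
      lintegral_prod_mul (f := G) (g := fun v => wt (m + 1) v * F v)
        (by fun_prop) (by fun_prop)]
    ring
  have key : ∀ (w : V × V → V), (∀ p, ‖w p‖ ^ 2 ≤ ‖p.1‖ ^ 2 + ‖p.2‖ ^ 2) →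
      ∫⁻ p : V × V, wt m (w p) * (kern ω p * (F p.2 * G p.1)) ≤
        c * ∫⁻ p : V × V, (wt (m + 1) p.1 + wt (m + 1) p.2) * (F p.2 * G p.1) := by
    intro w hw
    rw [← lintegral_const_mul _ (by fun_prop)]
    refine lintegral_mono fun p => ?_
    calc wt m (w p) * (kern ω p * (F p.2 * G p.1))
        = (kern ω p * wt m (w p)) * (F p.2 * G p.1) := by ring
      _ ≤ (c * (wt (m + 1) p.1 + wt (m + 1) p.2)) * (F p.2 * G p.1) := by
          exact mul_le_mul_left (kern_mul_wt_le hm hω p (hw p)) _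
      _ = _ := by ring
  simp_rw [mul_add]
  rw [lintegral_add_left (by fun_prop), hgain]
  refine (add_le_add (key _ (norm_sq_coll_le hω))
    (key (fun p => p.1) fun p => le_add_of_nonneg_right (sq_nonneg _))).trans (le_of_eq ?_)
  rw [hsplit, ENNReal.ofReal_mul (by norm_num), ENNReal.ofReal_ofNat]
  ring

instance inst_s6 : IsFiniteMeasure σS := inferInstanceAs (IsFiniteMeasure (volume : Measure V).toSphere)

/-- Tonelli's theorem, moving the integral over directions to the outside. -/
lemma lintegral_weight_swap {w : V → ℝ≥0∞} {K : (V × V) × S2 → ℝ≥0∞}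
    (hw : Measurable w) (hK : Measurable K) :
    ∫⁻ v : V, w v * ∫⁻ u : V, ∫⁻ ω : S2, K ((v, u), ω) ∂σS =
      ∫⁻ ω : S2, (∫⁻ p : V × V, w p.1 * K (p, ω)) ∂σS := by
  have hH : Measurable fun q : (V × V) × S2 => w q.1.1 * K q := by fun_prop
  have hI : Measurable fun p : V × V => ∫⁻ ω : S2, K (p, ω) ∂σS := hK.lintegral_prod_right'
  rw [← lintegral_lintegral_swap (f := fun p ω => w p.1 * K (p, ω)) hH.aemeasurable,
    Measure.volume_eq_prod, lintegral_prod _ hH.lintegral_prod_right'.aemeasurable]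
  refine lintegral_congr fun v => ?_
  have hv : Measurable fun u : V => ∫⁻ ω : S2, K ((v, u), ω) ∂σS :=
    hI.comp measurable_prodMk_left
  rw [← lintegral_const_mul _ hv]
  refine lintegral_congr fun u => ?_
  exact (lintegral_const_mul _ (hK.comp measurable_prodMk_left)).symm

lemma lintegral_gain_loss_le {m : ℝ} (hm : 0 ≤ m) {F G : V → ℝ≥0∞}
    (hF : Measurable F) (hG : Measurable G) :
    ∫⁻ v : V, wt m v * ∫⁻ u : V, ∫⁻ ω : S2, kern ω (v, u) *
        (F (coll ω (v, u)).2 * G (coll ω (v, u)).1 + F u * G v) ∂σS ≤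
      ENNReal.ofReal (2 * 2 ^ (m + 1)) *
        ((∫⁻ u, F u) * (∫⁻ v, wt (m + 1) v * G v) + (∫⁻ u, wt (m + 1) u * F u) * ∫⁻ v, G v)
        * σS Set.univ := by
  have hk := measurable_kern_uncurry
  have hc := measurable_coll_uncurry
  have hK : Measurable fun q : (V × V) × S2 => kern (q.2 : V) q.1 *
      (F (coll (q.2 : V) q.1).2 * G (coll (q.2 : V) q.1).1 + F q.1.2 * G q.1.1) := by
    fun_prop
  refine (lintegral_weight_swap (measurable_wt m) hK).trans_le ?_
  exact (lintegral_mono fun ω : S2 =>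
    lintegral_gain_loss_dir_le hm (norm_eq_of_mem_sphere ω) hF hG).trans_eq (lintegral_const _)

lemma enorm_Qop_le (f g : V → ℝ) (v : V) :
    ‖Qop f g v‖ₑ ≤ ∫⁻ u : V, ∫⁻ ω : S2, kern ω (v, u) *
      (‖f (coll ω (v, u)).2‖ₑ * ‖g (coll ω (v, u)).1‖ₑ + ‖f u‖ₑ * ‖g v‖ₑ) ∂σS := by
  refine (enorm_integral_le_lintegral_enorm _).trans (lintegral_mono fun u => ?_)
  refine (enorm_integral_le_lintegral_enorm _).trans (lintegral_mono fun ω => ?_)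
  rw [enorm_mul, Real.enorm_eq_ofReal_abs, abs_abs, ← enorm_mul, ← enorm_mul]
  exact mul_le_mul_right (enorm_sub_le) _

/-! ### Passage to Bochner integrals -/

lemma wt_mul_enorm (s : ℝ) (f : V → ℝ) (v : V) : wt s v * ‖f v‖ₑ = ‖jap v ^ s * f v‖ₑ := by
  rw [enorm_mul, wt, Real.enorm_of_nonneg (Real.rpow_nonneg (jap_nonneg _) _)]

lemma integrable_of_jap {s : ℝ} (hs : 0 ≤ s) {f : V → ℝ} (hf : Measurable f)
    (h : Integrable fun v : V => jap v ^ s * f v) : Integrable f := by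
  refine h.mono hf.aestronglyMeasurable (ae_of_all _ fun v => ?_)
  rw [norm_mul, Real.norm_of_nonneg (Real.rpow_nonneg (jap_nonneg _) _)]
  exact le_mul_of_one_le_left (norm_nonneg _) (Real.one_le_rpow (one_le_jap v) hs)

lemma lintegral_wt_mul {s : ℝ} {f : V → ℝ} (h : Integrable fun v : V => jap v ^ s * f v) :
    ∫⁻ v, wt s v * ‖f v‖ₑ = ENNReal.ofReal (∫ v, jap v ^ s * |f v|) := by
  simp_rw [wt_mul_enorm]
  rw [← ofReal_integral_norm_eq_lintegral_enorm h]
  simp_rw [norm_mul, Real.norm_eq_abs, abs_of_nonneg (Real.rpow_nonneg (jap_nonneg _) _)]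

lemma lintegral_enorm_eq {f : V → ℝ} (h : Integrable f) :
    ∫⁻ v, ‖f v‖ₑ = ENNReal.ofReal (∫ v, |f v|) :=
  (ofReal_integral_norm_eq_lintegral_enorm h).symm

/-- weighted `L¹` bound for the collision operator `Q`. -/
theorem stmt_6 :
    ∀ m : ℝ, 0 ≤ m → ∃ Cm > 0, ∀ f g : V → ℝ, Measurable f → Measurable g →
      Integrable (fun v : V => jap v ^ (m + 1) * f v) →
      Integrable (fun v : V => jap v ^ (m + 1) * g v) →
      ∫ v : V, jap v ^ m * |Qop f g v| ≤
        Cm * (∫ v : V, |f v|) * (∫ v : V, jap v ^ (m + 1) * |g v|)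
          + Cm * (∫ v : V, jap v ^ (m + 1) * |f v|) * (∫ v : V, |g v|) := by
  intro m hm
  set c : ℝ := 2 * 2 ^ (m + 1) * (σS Set.univ).toReal with hc
  have hc0 : 0 ≤ c := by positivity
  -- The added `1` gives positivity of the constant without computing the area of the sphere.
  refine ⟨c + 1, by linarith, fun f g hf hg hfi hgi => ?_⟩
  have hnn : ∀ (s : ℝ) (h : V → ℝ), 0 ≤ ∫ v, jap v ^ s * |h v| := fun s h =>
    integral_nonneg fun v => mul_nonneg (Real.rpow_nonneg (jap_nonneg _) _) (abs_nonneg _)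
  have hA : 0 ≤ ∫ v, |f v| := integral_nonneg fun v => abs_nonneg _
  have hB : 0 ≤ ∫ v, |g v| := integral_nonneg fun v => abs_nonneg _
  have hA' := hnn (m + 1) f
  have hB' := hnn (m + 1) g
  have hbound : ∫⁻ v, ‖jap v ^ m * |Qop f g v|‖ₑ ≤
      ENNReal.ofReal (c * ((∫ v, |f v|) * (∫ v, jap v ^ (m + 1) * |g v|)
        + (∫ v, jap v ^ (m + 1) * |f v|) * ∫ v, |g v|)) := by
    calc ∫⁻ v, ‖jap v ^ m * |Qop f g v|‖ₑ
        ≤ ∫⁻ v : V, wt m v * ∫⁻ u : V, ∫⁻ ω : S2, kern ω (v, u) *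
          (‖f (coll ω (v, u)).2‖ₑ * ‖g (coll ω (v, u)).1‖ₑ + ‖f u‖ₑ * ‖g v‖ₑ) ∂σS := by
          refine lintegral_mono fun v => ?_
          dsimp only
          rw [← wt_mul_enorm m (fun v => |Qop f g v|), Real.enorm_abs]
          exact mul_le_mul_right (enorm_Qop_le f g v) _
      _ ≤ _ := lintegral_gain_loss_le hm hf.enorm hg.enorm
      _ = _ := by
          rw [lintegral_wt_mul hfi, lintegral_wt_mul hgi,
            lintegral_enorm_eq (integrable_of_jap (by linarith) hf hfi),
            lintegral_enorm_eq (integrable_of_jap (by linarith) hg hgi),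
            ← ENNReal.ofReal_mul hA, ← ENNReal.ofReal_mul hA',
            ← ENNReal.ofReal_add (by positivity) (by positivity),
            ← ENNReal.ofReal_toReal (measure_ne_top σS Set.univ),
            ← ENNReal.ofReal_mul (by positivity), ← ENNReal.ofReal_mul (by positivity), hc]
          congr 1
          ring
  have h1 := (le_abs_self _).trans ((Real.norm_eq_abs _).symm.le.trans
    (norm_integral_le_lintegral_norm (μ := volume) fun v : V => jap v ^ m * |Qop f g v|))
  simp_rw [ofReal_norm] at h1
  have h2 := ENNReal.toReal_le_of_le_ofReal (by positivity) hbound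
  nlinarith [mul_nonneg hA hB', mul_nonneg hA' hB]
end
end
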